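/- Suppose q : W → X is a quotient map between Banach spaces, (x_λ)_{λ∈D_1} ⊂ B_X is a weakly null net, and v is a weak neighborhood of 0 in W. Then for any b > 2, there exist λ ∈ D_1 and w ∈ b·B_W ∩ v such that q(w) = x_λ. -/

import Mathlib

/-! Lift the net with norms at most `c = b / 2 > 1` and pass to an ultrafilter along which `f (w l)`
converges to some `t f` for each of the finitely many functionals `f` defining the neighbourhood.
The point `t` lies in the closure of the image of `ker q ∩ c • B_W`: otherwise Hahn–Banach gives a
functional `g` on `W` with `lim g (w l) > c * ‖g|_{ker q}‖`. However, extending `g|_{ker q}` to `h`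
with the same norm, `g - h` vanishes on `ker q`, hence factors through `q` and tends to `0` along
the lifts, which forces `lim g (w l) ≤ c * ‖h‖` (`limit_le_of_bound_on_ker`). So some `u ∈ ker q`
with `‖u‖ ≤ c` has almost the same coordinates as some `w l`, and `w l - u` is the desired
vector. -/

open Filter

theorem exists_lift_norm_le {W X : Type*}
    [NormedAddCommGroup W] [NormedSpace ℝ W] [NormedAddCommGroup X] [NormedSpace ℝ X]
    (q : W →L[ℝ] X) (hq : q '' Metric.ball (0 : W) 1 = Metric.ball (0 : X) 1)
    {c : ℝ} (hc : 1 < c) (x : X) : ∃ w : W, ‖w‖ ≤ c * ‖x‖ ∧ q w = x := by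
  by_cases hx : x = 0
  · exact ⟨0, by simp [hx], by simp [hx]⟩
  have hr : 0 < c * ‖x‖ := mul_pos (by linarith) (norm_pos_iff.mpr hx)
  have hy : (c * ‖x‖)⁻¹ • x ∈ Metric.ball (0 : X) 1 := by
    rw [mem_ball_zero_iff, norm_smul, norm_inv, Real.norm_of_nonneg hr.le, inv_mul_lt_iff₀ hr]
    nlinarith [norm_pos_iff.mpr hx]
  rw [← hq] at hy
  obtain ⟨w, hw, hqw⟩ := hy
  refine ⟨(c * ‖x‖) • w, ?_, ?_⟩
  · rw [norm_smul, Real.norm_of_nonneg hr.le]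
    have := (mem_ball_zero_iff.mp hw).le
    nlinarith
  · rw [map_smul, hqw, smul_inv_smul₀ (ne_of_gt hr)]

/-- A functional vanishing on `ker q` descends to a bounded functional on `X`; boundedness
comes from the norm control on lifts. -/
theorem exists_factor_of_vanish_on_ker {W X : Type*}
    [NormedAddCommGroup W] [NormedSpace ℝ W] [NormedAddCommGroup X] [NormedSpace ℝ X]
    (q : W →L[ℝ] X) (hq : q '' Metric.ball (0 : W) 1 = Metric.ball (0 : X) 1)
    (k : W →L[ℝ] ℝ) (hk : ∀ w, q w = 0 → k w = 0) :
    ∃ φ : X →L[ℝ] ℝ, ∀ w, φ (q w) = k w := by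
  choose S hS hqS using fun x => exists_lift_norm_le q hq (one_lt_two : (1 : ℝ) < 2) x
  have key : ∀ w w', q w = q w' → k w = k w' := fun w w' h => by
    have := hk (w - w') (by rw [map_sub, h, sub_self])
    rwa [map_sub, sub_eq_zero] at this
  let φ : X →ₗ[ℝ] ℝ :=
    { toFun := fun x => k (S x)
      map_add' := fun x y => by
        rw [← map_add]
        exact key _ _ (by rw [map_add, hqS, hqS, hqS])
      map_smul' := fun r x => by
        rw [RingHom.id_apply, ← map_smul]
        exact key _ _ (by rw [map_smul, hqS, hqS]) }
  refine ⟨φ.mkContinuous (‖k‖ * 2) fun x => ?_, fun w => key _ _ (hqS _)⟩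
  calc ‖k (S x)‖ ≤ ‖k‖ * ‖S x‖ := k.le_opNorm _
    _ ≤ ‖k‖ * (2 * ‖x‖) := by gcongr; exact hS x
    _ = ‖k‖ * 2 * ‖x‖ := by ring

/-- If `q ∘ w` is weakly null and `‖w l‖ ≤ c`, then a limit of `g (w l)` is at most any upper bound
of `g` on `ker q ∩ c • B_W`. -/
theorem limit_le_of_bound_on_ker {W X ι : Type*}
    [NormedAddCommGroup W] [NormedSpace ℝ W] [NormedAddCommGroup X] [NormedSpace ℝ X]
    (q : W →L[ℝ] X) (hq : q '' Metric.ball (0 : W) 1 = Metric.ball (0 : X) 1)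
    {U : Filter ι} [U.NeBot] {w : ι → W} {c : ℝ} (hc : 0 < c) (hw : ∀ l, ‖w l‖ ≤ c)
    (hweak : ∀ f : X →L[ℝ] ℝ, Filter.Tendsto (fun l => f (q (w l))) U (nhds 0))
    (g : W →L[ℝ] ℝ) {s : ℝ} (hs : ∀ u, q u = 0 → ‖u‖ ≤ c → g u ≤ s)
    {a : ℝ} (ha : Filter.Tendsto (fun l => g (w l)) U (nhds a)) : a ≤ s := by
  have hs0 : 0 ≤ s := by simpa using hs 0 (map_zero q) (by simpa using hc.le)
  let K : Submodule ℝ W := LinearMap.ker q.toLinearMap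
  have hK : ∀ u : K, q (u : W) = 0 := fun u => u.2
  obtain ⟨h, hext, hnorm⟩ := exists_extension_norm_eq K (g.comp K.subtypeL)
  have hgu : ∀ u, q u = 0 → g u ≤ s / c * ‖u‖ := by
    intro u hu
    by_cases hu0 : u = 0
    · simp [hu0]
    have hn : 0 < ‖u‖ := norm_pos_iff.mpr hu0
    have h1 := hs ((c / ‖u‖) • u) (by rw [map_smul, hu, smul_zero])
      (by rw [norm_smul, Real.norm_of_nonneg (by positivity), div_mul_cancel₀ _ hn.ne'])
    rw [map_smul, smul_eq_mul, div_mul_eq_mul_div, div_le_iff₀ hn] at h1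
    rw [div_mul_eq_mul_div, le_div_iff₀ hc]
    linarith
  have hhn : ‖h‖ ≤ s / c := by
    rw [hnorm]
    refine ContinuousLinearMap.opNorm_le_bound _ (by positivity) fun u => ?_
    rw [Real.norm_eq_abs, abs_le]
    have h1 := hgu u (hK u)
    have h2 := hgu (-u) (by rw [map_neg, hK u, neg_zero])
    rw [map_neg, norm_neg] at h2
    exact ⟨by simpa using (by linarith : -(s / c * ‖(u : W)‖) ≤ g u), h1⟩
  obtain ⟨φ, hφ⟩ := exists_factor_of_vanish_on_ker q hq (g - h) fun u hu => by
    have := hext ⟨u, hu⟩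
    simpa [sub_eq_zero] using this.symm
  have hlim := ha.sub (hweak φ)
  rw [sub_zero] at hlim
  refine le_of_tendsto hlim (Filter.Eventually.of_forall fun l => ?_)
  rw [hφ]
  calc g (w l) - (g - h) (w l) = h (w l) := by simp
    _ ≤ ‖h‖ * ‖w l‖ := (le_abs_self _).trans (h.le_opNorm _)
    _ ≤ s / c * c := by gcongr; exact hw l
    _ = s := div_mul_cancel₀ _ (ne_of_gt hc)

/-- If `q : W → X` is a quotient map (it maps the open unit ball of `W` onto
the open unit ball of `X`), `(x_λ)_{λ ∈ D₁} ⊆ B_X` is a weakly null net, and `v` is a weak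
neighborhood of `0` in `W`, then for every `b > 2` there are `λ ∈ D₁` and `w ∈ b·B_W ∩ v`
with `q w = x_λ`. -/
theorem quotient_lift_of_weakly_null {W X : Type*}
    [NormedAddCommGroup W] [NormedSpace ℝ W] [NormedAddCommGroup X] [NormedSpace ℝ X]
    (q : W →L[ℝ] X) (hq : q '' Metric.ball (0 : W) 1 = Metric.ball (0 : X) 1)
    {D₁ : Type*} [Preorder D₁] [IsDirected D₁ (· ≤ ·)] [Nonempty D₁]
    (x : D₁ → X) (hxball : ∀ l, x l ∈ Metric.closedBall (0 : X) 1)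
    (hweak : ∀ f : X →L[ℝ] ℝ, Filter.Tendsto (fun l => f (x l)) Filter.atTop (nhds 0))
    (v : Set W)
    (hv : ∃ (F : Finset (W →L[ℝ] ℝ)) (δ : ℝ), 0 < δ ∧ {w : W | ∀ f ∈ F, |f w| < δ} ⊆ v)
    (b : ℝ) (hb : 2 < b) :
    ∃ (l : D₁) (w : W), ‖w‖ ≤ b ∧ w ∈ v ∧ q w = x l := by
  obtain ⟨F, δ, hδ, hFv⟩ := hv
  set c := b / 2 with hcdef
  have hc1 : 1 < c := by linarith
  have hc0 : 0 < c := by linarith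
  choose w hw hqw using fun l => exists_lift_norm_le q hq hc1 (x l)
  have hwc : ∀ l, ‖w l‖ ≤ c := fun l => by
    have := mem_closedBall_zero_iff.mp (hxball l)
    nlinarith [hw l]
  let U : Ultrafilter D₁ := Ultrafilter.of atTop
  have hU : (U : Filter D₁) ≤ atTop := Ultrafilter.of_le _
  let T : W →L[ℝ] (F → ℝ) := ContinuousLinearMap.pi fun f => (f : W →L[ℝ] ℝ)
  have hTb : ∀ l, T (w l) ∈ Metric.closedBall (0 : F → ℝ) (‖T‖ * c) := fun l => by
    rw [mem_closedBall_zero_iff]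
    exact T.le_opNorm_of_le (hwc l)
  obtain ⟨t, -, ht⟩ := (isCompact_closedBall (0 : F → ℝ) (‖T‖ * c)).ultrafilter_le_nhds
    (U.map fun l => T (w l))
    (by rw [le_principal_iff]; exact Filter.mem_map.mpr (Filter.univ_mem' hTb))
  have ht' : Tendsto (fun l => T (w l)) U (nhds t) := ht
  let C : Set W := {u | q u = 0 ∧ ‖u‖ ≤ c}
  have hC : Convex ℝ C := by
    have h1 : C = (LinearMap.ker q.toLinearMap : Set W) ∩ Metric.closedBall 0 c := by
      ext u; simp [C]
    rw [h1]
    exact (Submodule.convex _).inter (convex_closedBall _ _)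
  have htC : t ∈ closure (T '' C) := by
    by_contra hn
    obtain ⟨a, s, has, hst⟩ := geometric_hahn_banach_closed_point
      (hC.is_linear_image T.toLinearMap.isLinear).closure isClosed_closure hn
    refine absurd (limit_le_of_bound_on_ker q hq hc0 hwc (fun f => ?_) (a.comp T) (s := s)
      (fun u hu hun => (has _ (subset_closure ⟨u, ⟨hu, hun⟩, rfl⟩)).le)
      ((a.continuous.tendsto t).comp ht')) (not_le.mpr hst)
    simp_rw [hqw]
    exact (hweak f).mono_left hU
  obtain ⟨_, ⟨u, ⟨hqu, hun⟩, rfl⟩, hut⟩ := Metric.mem_closure_iff.mp htC (δ / 2) (half_pos hδ)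
  obtain ⟨l, hl⟩ := (ht'.eventually (Metric.ball_mem_nhds t (half_pos hδ))).exists
  refine ⟨l, w l - u, ?_, hFv fun f hf => ?_, by rw [map_sub, hqw, hqu, sub_zero]⟩
  · have := norm_sub_le (w l) u
    linarith [hwc l]
  · have h1 : dist (T (w l)) (T u) < δ := by
      have := dist_triangle (T (w l)) t (T u)
      have h3 : dist (T (w l)) t < δ / 2 := hl
      linarith
    have h2 := (dist_le_pi_dist (T (w l)) (T u) ⟨f, hf⟩).trans_lt h1
    rw [Real.dist_eq] at h2
    rw [map_sub]
    exact h2
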